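/- Let s, t > 0 and let μ be an absolutely continuous probability measure on ℝⁿ that is (1/t)-uniformly log-concave. Then the convolution μ * γ_s of μ with the centered Gaussian measure of covariance s·Id is (1/(t+s))-uniformly log-concave. Equivalently: if the density of μ divided by γ_t(x) = (2πt)^{−n/2} e^{−|x|²/(2t)} is log-concave, then the density of μ * γ_s divided by γ_{t+s} is log-concave. -/

import Mathlib

open MeasureTheory Real
open scoped ENNReal RealInnerProductSpace

noncomputable section

abbrev Euc (n : ℕ) := EuclideanSpace ℝ (Fin n)

/-- A nonnegative function `g` is log-concave: `g(ax+by) ≥ g(x)^a g(y)^b`. -/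
def IsLogConcaveFun {n : ℕ} (g : Euc n → ℝ) : Prop :=
  (∀ x, 0 ≤ g x) ∧
  ∀ x y : Euc n, ∀ a b : ℝ, 0 ≤ a → 0 ≤ b → a + b = 1 →
    g x ^ a * g y ^ b ≤ g (a • x + b • y)

def IsLogConcaveMeasure {n : ℕ} (μ : Measure (Euc n)) : Prop :=
  ∃ ρ : Euc n → ℝ, Measurable ρ ∧ IsLogConcaveFun ρ ∧
    μ = volume.withDensity (fun x => ENNReal.ofReal (ρ x))

def poincareSet {n : ℕ} (μ : Measure (Euc n)) : Set ℝ :=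
  {C : ℝ | 0 ≤ C ∧ ∀ f : Euc n → ℝ, LocallyLipschitz f →
    Integrable (fun x => ‖gradient f x‖ ^ 2) μ →
    ∫ x, f x ^ 2 ∂μ - (∫ x, f x ∂μ) ^ 2 ≤ C * ∫ x, ‖gradient f x‖ ^ 2 ∂μ}

def poincareConst {n : ℕ} (μ : Measure (Euc n)) : ℝ := sInf (poincareSet μ)

def covMatrix {n : ℕ} (μ : Measure (Euc n)) : Matrix (Fin n) (Fin n) ℝ :=
  Matrix.of fun i j => ∫ x, x i * x j ∂μ - (∫ x, x i ∂μ) * (∫ x, x j ∂μ)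

def opNorm {n : ℕ} (M : Matrix (Fin n) (Fin n) ℝ) : ℝ :=
  ‖Matrix.toEuclideanCLM (𝕜 := ℝ) M‖

def IsIsotropic {n : ℕ} (μ : Measure (Euc n)) : Prop :=
  (∫ x, x ∂μ) = 0 ∧ ∀ i j, ∫ x, x i * x j ∂μ = if i = j then 1 else 0

def UniformlyLogConcave {n : ℕ} (t : ℝ) (μ : Measure (Euc n)) : Prop :=
  ∃ g : Euc n → ℝ, Measurable g ∧ IsLogConcaveFun g ∧
    μ = volume.withDensity (fun x => ENNReal.ofReal (Real.exp (-t * ‖x‖ ^ 2 / 2) * g x))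

def IsRegularPotential {n : ℕ} (ψ : Euc n → ℝ) : Prop :=
  ContDiff ℝ (⊤ : ℕ∞) ψ ∧
  (∃ ε : ℝ, 0 < ε ∧ ∀ x v : Euc n,
    ε * ‖v‖ ^ 2 ≤ iteratedFDeriv ℝ 2 ψ x ![v, v] ∧
    iteratedFDeriv ℝ 2 ψ x ![v, v] ≤ ε⁻¹ * ‖v‖ ^ 2) ∧
  (∀ m : ℕ, ∃ C : ℝ, ∃ k : ℕ, ∀ x, ‖iteratedFDeriv ℝ m ψ x‖ ≤ C * (1 + ‖x‖) ^ k)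

def IsRegularMeasure {n : ℕ} (μ : Measure (Euc n)) (ψ : Euc n → ℝ) : Prop :=
  IsRegularPotential ψ ∧ μ = volume.withDensity (fun x => ENNReal.ofReal (Real.exp (-ψ x)))

def IsTempered {n : ℕ} (ρ : Euc n → ℝ) (f : Euc n → ℝ) : Prop :=
  ContDiff ℝ (⊤ : ℕ∞) f ∧ ∀ m : ℕ, ∃ C : ℝ, 0 < C ∧ ∃ a : ℝ, 0 < a ∧ ∀ x,
    ‖iteratedFDeriv ℝ m f x‖ ≤ C / Real.sqrt (ρ x) * Real.exp (-a * ‖x‖)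

def lap {n : ℕ} (f : Euc n → ℝ) (x : Euc n) : ℝ :=
  ∑ i, iteratedFDeriv ℝ 2 f x ![EuclideanSpace.single i (1:ℝ), EuclideanSpace.single i (1:ℝ)]

def Lop {n : ℕ} (ψ u : Euc n → ℝ) (x : Euc n) : ℝ :=
  lap u x - ⟪gradient ψ x, gradient u x⟫

def gaussDensity (n : ℕ) (s : ℝ) (x : Euc n) : ℝ :=
  (2 * π * s) ^ (-(n : ℝ) / 2) * Real.exp (-‖x‖ ^ 2 / (2 * s))

def gaussMeasure (n : ℕ) (s : ℝ) : Measure (Euc n) :=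
  volume.withDensity fun x => ENNReal.ofReal (gaussDensity n s x)

def tiltZ {n : ℕ} (ρ : Euc n → ℝ) (t : ℝ) (θ : Euc n) : ℝ :=
  ∫ x, Real.exp (⟪θ, x⟫ - t * ‖x‖ ^ 2 / 2) * ρ x

def tiltDensity {n : ℕ} (ρ : Euc n → ℝ) (t : ℝ) (θ : Euc n) (x : Euc n) : ℝ :=
  Real.exp (⟪θ, x⟫ - t * ‖x‖ ^ 2 / 2) * ρ x / tiltZ ρ t θ

def tiltMeasure {n : ℕ} (ρ : Euc n → ℝ) (t : ℝ) (θ : Euc n) : Measure (Euc n) :=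
  volume.withDensity fun x => ENNReal.ofReal (tiltDensity ρ t θ x)

def varD {n : ℕ} (p : Euc n → ℝ) (f : Euc n → ℝ) : ℝ :=
  (∫ x, f x ^ 2 * p x) - (∫ x, f x * p x) ^ 2

end
/-- Convolution of measures on `ℝⁿ` (pushforward of the product under addition). -/
noncomputable def measConv {n : ℕ} (μ ν : Measure (Euc n)) : Measure (Euc n) :=
  Measure.map (fun p : Euc n × Euc n => p.1 + p.2) (μ.prod ν)

/-!
Let `μ` and `ν` have densities `e^{-u|x|²/2} g` and `e^{-v|x|²/2} h` with `g`, `h` log-concave.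
Completing the square, `u|x|² + v|z - x|² = (uv/(u+v)) |z|² + (u+v) |x - (v/(u+v)) z|²`, shows that
the density of `μ * ν` is `e^{-(uv/(u+v))|z|²/2}` times the marginal
`∫ g(x) h(z - x) e^{-(u+v)|x - (v/(u+v)) z|²/2} dx` of a function that is jointly log-concave in
`(z, x)`; such a marginal is log-concave by the Prékopa–Leindler inequality. The Gaussian `γ_s` is
the case `v = 1/s` with `h` constant.
-/

open Set Module
open scoped Pointwise

/-! ### The Prékopa–Leindler inequality -/

section OneDimensional

lemma volume_add_volume_le_volume_add_of_isCompact {K L : Set ℝ} (hK : IsCompact K)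
    (hL : IsCompact L) (hKne : K.Nonempty) (hLne : L.Nonempty) :
    volume K + volume L ≤ volume (K + L) := by
  obtain ⟨M, hM, hM_max⟩ := hK.exists_isGreatest hKne
  obtain ⟨m, hm, hm_min⟩ := hL.exists_isLeast hLne
  -- The translates `m + K` and `M + L` lie in `K + L` and share at most the point `M + m`.
  have disjoint : AEDisjoint volume (m +ᵥ K) (M +ᵥ L) := by
    refine measure_mono_null (t := {M + m}) ?_ (measure_singleton _)
    rintro _ ⟨⟨x, hx, rfl⟩, ⟨y, hy, hxy⟩⟩
    have hxM := hM_max hx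
    have hmy := hm_min hy
    simp only [vadd_eq_add, mem_singleton_iff] at hxy ⊢
    linarith
  calc volume K + volume L = volume (m +ᵥ K) + volume (M +ᵥ L) := by
        rw [measure_vadd, measure_vadd]
    _ = volume ((m +ᵥ K) ∪ (M +ᵥ L)) :=
        (measure_union₀ (hL.vadd M).measurableSet.nullMeasurableSet disjoint).symm
    _ ≤ volume (K + L) := by
        refine measure_mono (union_subset ?_ ?_)
        · rintro _ ⟨x, hx, rfl⟩
          exact ⟨x, hx, m, hm, add_comm x m⟩
        · rintro _ ⟨y, hy, rfl⟩
          exact ⟨M, hM, y, hy, rfl⟩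

lemma volume_add_volume_le_volume_add {A B : Set ℝ} (hA : MeasurableSet A) (hB : MeasurableSet B)
    (hAne : A.Nonempty) (hBne : B.Nonempty) : volume A + volume B ≤ volume (A + B) := by
  obtain ⟨x, hx⟩ := hAne
  obtain ⟨y, hy⟩ := hBne
  have compact_le (K) (hKA : K ⊆ A) (hK : IsCompact K) (L) (hLB : L ⊆ B) (hL : IsCompact L) :
      volume K + volume L ≤ volume (A + B) :=
    calc volume K + volume L ≤ volume (insert x K) + volume (insert y L) := by
          gcongr <;> exact subset_insert _ _
      _ ≤ volume (insert x K + insert y L) :=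
          volume_add_volume_le_volume_add_of_isCompact (hK.insert x) (hL.insert y)
            (insert_nonempty _ _) (insert_nonempty _ _)
      _ ≤ volume (A + B) := by
          gcongr
          exacts [insert_subset hx hKA, insert_subset hy hLB]
  rw [hA.measure_eq_iSup_isCompact, hB.measure_eq_iSup_isCompact]
  simp only [iSup_and']
  exact ENNReal.biSup_add_biSup_le' ⟨∅, empty_subset _, isCompact_empty⟩
    ⟨∅, empty_subset _, isCompact_empty⟩ fun K hK L hL => compact_le K hK.1 hK.2 L hL.1 hL.2

lemma lintegral_eq_lintegral_meas_ofReal_lt {α : Type*} [MeasurableSpace α] (μ : Measure α)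
    {f : α → ℝ≥0∞} (hf : AEMeasurable f μ) :
    ∫⁻ x, f x ∂μ = ∫⁻ r in Ioi (0 : ℝ), μ {x | ENNReal.ofReal r < f x} := by
  by_cases h_top : μ {x | f x = ⊤} = 0
  · have hf_ne_top : ∀ᵐ x ∂μ, f x ≠ ⊤ := by simpa [ae_iff] using h_top
    calc ∫⁻ x, f x ∂μ = ∫⁻ x, ENNReal.ofReal (f x).toReal ∂μ :=
          lintegral_congr_ae (hf_ne_top.mono fun x hx => (ENNReal.ofReal_toReal hx).symm)
      _ = ∫⁻ r in Ioi (0 : ℝ), μ {x | r < (f x).toReal} :=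
          lintegral_eq_lintegral_meas_lt μ (ae_of_all _ fun _ => ENNReal.toReal_nonneg)
            hf.ennreal_toReal
      _ = ∫⁻ r in Ioi (0 : ℝ), μ {x | ENNReal.ofReal r < f x} := by
          refine setLIntegral_congr_fun measurableSet_Ioi fun r hr => measure_congr ?_
          filter_upwards [hf_ne_top] with x hx
          exact propext (ENNReal.ofReal_lt_iff_lt_toReal (le_of_lt hr) hx).symm
  · rw [lintegral_eq_top_of_measure_eq_top_ne_zero hf h_top, eq_comm, eq_top_iff]
    calc ⊤ = ∫⁻ _ in Ioi (0 : ℝ), μ {x | f x = ⊤} := by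
          rw [setLIntegral_const, Real.volume_Ioi, ENNReal.mul_top h_top]
      _ ≤ ∫⁻ r in Ioi (0 : ℝ), μ {x | ENNReal.ofReal r < f x} := by
          gcongr with r x
          exact fun hx => hx ▸ ENNReal.ofReal_lt_top

lemma lintegral_eq_iSup_lintegral_min_natCast {α : Type*} [MeasurableSpace α] (μ : Measure α)
    {f : α → ℝ≥0∞} (hf : Measurable f) :
    ∫⁻ x, f x ∂μ = ⨆ n : ℕ, ∫⁻ x, min (f x) n ∂μ := by
  rw [← lintegral_iSup (fun n => hf.min measurable_const)
    fun m n hmn x => min_le_min_left _ (Nat.cast_le.2 hmn)]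
  refine lintegral_congr fun x => ?_
  rw [← inf_iSup_eq, ENNReal.iSup_natCast, inf_top_eq]

variable {a b : ℝ} (ha : 0 < a) (hb : 0 < b) (hab : a + b = 1)
include ha hb hab

lemma rpow_mul_rpow_le_ofReal_mul_add_ofReal_mul (x y : ℝ≥0∞) :
    x ^ a * y ^ b ≤ ENNReal.ofReal a * x + ENNReal.ofReal b * y := by
  have ha' : ENNReal.ofReal a ≠ 0 := by simpa using ha
  have hb' : ENNReal.ofReal b ≠ 0 := by simpa using hb
  induction x with
  | top => simp [ENNReal.mul_top ha']
  | coe x =>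
    induction y with
    | top => simp [ENNReal.mul_top hb']
    | coe y =>
      have amgm := NNReal.geom_mean_le_arith_mean2_weighted a.toNNReal b.toNNReal x y
        (by rw [← Real.toNNReal_add ha.le hb.le, hab, Real.toNNReal_one])
      rw [Real.coe_toNNReal a ha.le, Real.coe_toNNReal b hb.le] at amgm
      rw [← ENNReal.coe_rpow_of_nonneg _ ha.le, ← ENNReal.coe_rpow_of_nonneg _ hb.le]
      exact ENNReal.coe_le_coe.2 amgm

variable {f g h : ℝ → ℝ≥0∞} (hf : Measurable f) (hg : Measurable g)
include hf hg

lemma ofReal_mul_volume_superlevel_add_le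
    (hfgh : ∀ x y, f x ^ a * g y ^ b ≤ h (a • x + b • y)) {c : ℝ≥0∞}
    (hcf : c < ⨆ x, f x) (hcg : c < ⨆ x, g x) :
    ENNReal.ofReal a * volume {x | c < f x} + ENNReal.ofReal b * volume {x | c < g x} ≤
      volume {x | c < h x} := by
  have superlevel_add_subset : a • {x | c < f x} + b • {x | c < g x} ⊆ {x | c < h x} := by
    rintro _ ⟨_, ⟨x, hx, rfl⟩, _, ⟨y, hy, rfl⟩, rfl⟩
    calc c = c ^ a * c ^ b := by
          rw [← ENNReal.rpow_add_of_nonneg _ _ ha.le hb.le, hab, ENNReal.rpow_one]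
      _ < f x ^ a * g y ^ b :=
          ENNReal.mul_lt_mul (ENNReal.rpow_lt_rpow hx ha) (ENNReal.rpow_lt_rpow hy hb)
      _ ≤ h (a • x + b • y) := hfgh x y
  calc ENNReal.ofReal a * volume {x | c < f x} + ENNReal.ofReal b * volume {x | c < g x}
      = volume (a • {x | c < f x}) + volume (b • {x | c < g x}) := by
        simp only [Measure.addHaar_smul_of_nonneg _ ha.le, Measure.addHaar_smul_of_nonneg _ hb.le,
          finrank_self, pow_one]
    _ ≤ volume (a • {x | c < f x} + b • {x | c < g x}) :=
        volume_add_volume_le_volume_add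
          ((measurableSet_lt measurable_const hf).const_smul_of_ne_zero ha.ne')
          ((measurableSet_lt measurable_const hg).const_smul_of_ne_zero hb.ne')
          (Nonempty.smul_set (lt_iSup_iff.1 hcf)) (Nonempty.smul_set (lt_iSup_iff.1 hcg))
    _ ≤ volume {x | c < h x} := measure_mono superlevel_add_subset

variable (hh : Measurable h)
include hh

lemma prekopaLeindler_real_of_iSup_eq_one (hf_sup : ⨆ x, f x = 1) (hg_sup : ⨆ x, g x = 1)
    (hfgh : ∀ x y, f x ^ a * g y ^ b ≤ h (a • x + b • y)) :
    (∫⁻ x, f x) ^ a * (∫⁻ x, g x) ^ b ≤ ∫⁻ x, h x := by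
  have superlevel_eq_empty {k : ℝ → ℝ≥0∞} (hk : ⨆ x, k x = 1) {c : ℝ≥0∞} (hc : 1 ≤ c) :
      {x | c < k x} = ∅ :=
    eq_empty_of_forall_notMem fun x => not_lt.2 ((hk ▸ le_iSup k x).trans hc)
  have hf_meas : Measurable fun r : ℝ => volume {x | ENNReal.ofReal r < f x} :=
    Antitone.measurable fun r r' hr =>
      measure_mono fun x hx => (ENNReal.ofReal_le_ofReal hr).trans_lt hx
  calc (∫⁻ x, f x) ^ a * (∫⁻ x, g x) ^ b
      ≤ ENNReal.ofReal a * (∫⁻ x, f x) + ENNReal.ofReal b * (∫⁻ x, g x) :=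
        rpow_mul_rpow_le_ofReal_mul_add_ofReal_mul ha hb hab _ _
    _ = ∫⁻ r in Ioi (0 : ℝ), (ENNReal.ofReal a * volume {x | ENNReal.ofReal r < f x} +
          ENNReal.ofReal b * volume {x | ENNReal.ofReal r < g x}) := by
        rw [lintegral_add_left (hf_meas.const_mul _),
          lintegral_const_mul' _ _ ENNReal.ofReal_ne_top,
          lintegral_const_mul' _ _ ENNReal.ofReal_ne_top,
          ← lintegral_eq_lintegral_meas_ofReal_lt _ hf.aemeasurable,
          ← lintegral_eq_lintegral_meas_ofReal_lt _ hg.aemeasurable]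
    _ ≤ ∫⁻ r in Ioi (0 : ℝ), volume {x | ENNReal.ofReal r < h x} := by
        refine lintegral_mono fun r => ?_
        rcases lt_or_ge (ENNReal.ofReal r) 1 with hr | hr
        · exact ofReal_mul_volume_superlevel_add_le ha hb hab hf hg hfgh
            (hf_sup.symm ▸ hr) (hg_sup.symm ▸ hr)
        · simp [superlevel_eq_empty hf_sup hr, superlevel_eq_empty hg_sup hr]
    _ = ∫⁻ x, h x := (lintegral_eq_lintegral_meas_ofReal_lt _ hh.aemeasurable).symm

lemma prekopaLeindler_real_of_iSup_ne_top (hf_sup : ⨆ x, f x ≠ ⊤) (hg_sup : ⨆ x, g x ≠ ⊤)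
    (hfgh : ∀ x y, f x ^ a * g y ^ b ≤ h (a • x + b • y)) :
    (∫⁻ x, f x) ^ a * (∫⁻ x, g x) ^ b ≤ ∫⁻ x, h x := by
  set M := ⨆ x, f x with hM
  set N := ⨆ x, g x with hN
  by_cases hM0 : M = 0
  · have hf0 : ∀ x, f x = 0 := ENNReal.iSup_eq_zero.1 hM0
    simp [hf0, ENNReal.zero_rpow_of_pos ha]
  by_cases hN0 : N = 0
  · have hg0 : ∀ x, g x = 0 := ENNReal.iSup_eq_zero.1 hN0
    simp [hg0, ENNReal.zero_rpow_of_pos hb]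
  have inv_scale_ne_zero : M⁻¹ ^ a * N⁻¹ ^ b ≠ 0 := by simp [hM0, hN0, hf_sup, hg_sup]
  have inv_scale_ne_top : M⁻¹ ^ a * N⁻¹ ^ b ≠ ⊤ :=
    ENNReal.mul_ne_top (ENNReal.rpow_ne_top_of_nonneg ha.le (ENNReal.inv_ne_top.2 hM0))
      (ENNReal.rpow_ne_top_of_nonneg hb.le (ENNReal.inv_ne_top.2 hN0))
  have mul_rpow_mul_mul_rpow (p q : ℝ≥0∞) :
      (M⁻¹ * p) ^ a * (N⁻¹ * q) ^ b = M⁻¹ ^ a * N⁻¹ ^ b * (p ^ a * q ^ b) := by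
    rw [ENNReal.mul_rpow_of_nonneg _ _ ha.le, ENNReal.mul_rpow_of_nonneg _ _ hb.le,
      mul_mul_mul_comm]
  have normalized := prekopaLeindler_real_of_iSup_eq_one ha hb hab
    (hf.const_mul M⁻¹) (hg.const_mul N⁻¹) (hh.const_mul (M⁻¹ ^ a * N⁻¹ ^ b))
    (by rw [← ENNReal.mul_iSup, ← hM, ENNReal.inv_mul_cancel hM0 hf_sup])
    (by rw [← ENNReal.mul_iSup, ← hN, ENNReal.inv_mul_cancel hN0 hg_sup])
    (fun x y => by
      rw [mul_rpow_mul_mul_rpow]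
      gcongr
      exact hfgh x y)
  rw [lintegral_const_mul _ hf, lintegral_const_mul _ hg, lintegral_const_mul _ hh,
    mul_rpow_mul_mul_rpow] at normalized
  exact (ENNReal.mul_le_mul_iff_right inv_scale_ne_zero inv_scale_ne_top).1 normalized

end OneDimensional

section PrekopaLeindler

/-- The measure `μ` satisfies the Prékopa–Leindler inequality. It is a predicate on the measure
rather than a theorem about Lebesgue measure so that it can be propagated through products and
linear images, which is how it reaches every dimension. -/
def SatisfiesPrekopaLeindler {E : Type*} [AddCommGroup E] [Module ℝ E] [MeasurableSpace E]
    (μ : Measure E) : Prop :=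
  ∀ ⦃a b : ℝ⦄, 0 < a → 0 < b → a + b = 1 → ∀ ⦃f g h : E → ℝ≥0∞⦄,
    Measurable f → Measurable g → Measurable h →
    (∀ x y, f x ^ a * g y ^ b ≤ h (a • x + b • y)) →
    (∫⁻ x, f x ∂μ) ^ a * (∫⁻ x, g x ∂μ) ^ b ≤ ∫⁻ x, h x ∂μ

variable {E F : Type*} [AddCommGroup E] [Module ℝ E] [MeasurableSpace E]
  [AddCommGroup F] [Module ℝ F] [MeasurableSpace F] {μ : Measure E} {ν : Measure F}

lemma satisfiesPrekopaLeindler_dirac (x : E) : SatisfiesPrekopaLeindler (Measure.dirac x) := by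
  intro a b _ _ hab f g h hf hg hh hfgh
  rw [lintegral_dirac' _ hf, lintegral_dirac' _ hg, lintegral_dirac' _ hh]
  simpa only [Convex.combo_self hab] using hfgh x x

lemma satisfiesPrekopaLeindler_volume_real :
    SatisfiesPrekopaLeindler (volume : Measure ℝ) := by
  intro a b ha hb hab f g h hf hg hh hfgh
  have iSup_min_ne_top (k : ℝ → ℝ≥0∞) (n : ℕ) : ⨆ x, min (k x) n ≠ ⊤ :=
    ne_top_of_le_ne_top (ENNReal.natCast_ne_top n) (iSup_le fun _ => min_le_right _ _)
  have rpow_eq_iSup {k : ℝ → ℝ≥0∞} (hk : Measurable k) {c : ℝ} (hc : 0 < c) :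
      (∫⁻ x, k x) ^ c = ⨆ n : ℕ, (∫⁻ x, min (k x) n) ^ c := by
    rw [lintegral_eq_iSup_lintegral_min_natCast _ hk]
    exact (ENNReal.orderIsoRpow c hc).map_iSup _
  rw [rpow_eq_iSup hf ha, rpow_eq_iSup hg hb]
  simp only [ENNReal.iSup_mul, ENNReal.mul_iSup]
  refine iSup₂_le fun n m => ?_
  refine prekopaLeindler_real_of_iSup_ne_top ha hb hab (hf.min measurable_const)
    (hg.min measurable_const) hh (iSup_min_ne_top f m) (iSup_min_ne_top g n) fun x y => ?_
  refine le_trans ?_ (hfgh x y)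
  gcongr <;> exact min_le_left _ _

namespace SatisfiesPrekopaLeindler

lemma prod [SFinite μ] [SFinite ν] (hμ : SatisfiesPrekopaLeindler μ)
    (hν : SatisfiesPrekopaLeindler ν) : SatisfiesPrekopaLeindler (μ.prod ν) := by
  intro a b ha hb hab f g h hf hg hh hfgh
  rw [lintegral_prod _ hf.aemeasurable, lintegral_prod _ hg.aemeasurable,
    lintegral_prod _ hh.aemeasurable]
  refine hμ ha hb hab hf.lintegral_prod_right' hg.lintegral_prod_right' hh.lintegral_prod_right'
    fun x y => ?_
  exact hν ha hb hab (hf.comp measurable_prodMk_left) (hg.comp measurable_prodMk_left)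
    (hh.comp measurable_prodMk_left) fun x' y' => hfgh (x, x') (y, y')

lemma of_measurePreserving (hμ : SatisfiesPrekopaLeindler μ) {L : E → F} (hL : IsLinearMap ℝ L)
    (hL_mp : MeasurePreserving L μ ν) : SatisfiesPrekopaLeindler ν := by
  intro a b ha hb hab f g h hf hg hh hfgh
  rw [← hL_mp.lintegral_comp hf, ← hL_mp.lintegral_comp hg, ← hL_mp.lintegral_comp hh]
  refine hμ ha hb hab (hf.comp hL_mp.measurable) (hg.comp hL_mp.measurable)
    (hh.comp hL_mp.measurable) fun x y => ?_
  rw [hL.map_add, hL.map_smul, hL.map_smul]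
  exact hfgh (L x) (L y)

end SatisfiesPrekopaLeindler

lemma satisfiesPrekopaLeindler_volume_pi (n : ℕ) :
    SatisfiesPrekopaLeindler (volume : Measure (Fin n → ℝ)) := by
  induction n with
  | zero =>
    rw [Measure.volume_pi_eq_dirac 0]
    exact satisfiesPrekopaLeindler_dirac 0
  | succ n ih =>
    have cons_measurePreserving : MeasurePreserving (Fin.consLinearEquiv ℝ fun _ : Fin (n + 1) => ℝ)
        (volume.prod volume) volume := by
      convert! (volume_preserving_piFinSuccAbove (fun _ : Fin (n + 1) => ℝ) 0).symm using 1
      exact congrArg DFunLike.coe (Fin.insertNthEquiv_zero fun _ => ℝ).symm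
    exact (satisfiesPrekopaLeindler_volume_real.prod ih).of_measurePreserving
      (Fin.consLinearEquiv ℝ fun _ => ℝ).toLinearMap.isLinear cons_measurePreserving

lemma satisfiesPrekopaLeindler_volume {V : Type*} [NormedAddCommGroup V] [InnerProductSpace ℝ V]
    [FiniteDimensional ℝ V] [MeasurableSpace V] [BorelSpace V] :
    SatisfiesPrekopaLeindler (volume : Measure V) :=
  ((satisfiesPrekopaLeindler_volume_pi _).of_measurePreserving
      (WithLp.linearEquiv 2 ℝ _).symm.toLinearMap.isLinear
      (PiLp.volume_preserving_toLp _)).of_measurePreserving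
    (stdOrthonormalBasis ℝ V).repr.symm.toLinearEquiv.toLinearMap.isLinear
    (stdOrthonormalBasis ℝ V).measurePreserving_repr_symm

end PrekopaLeindler

/-! ### Log-concave functions with values in `[0, ∞]` -/

/-- Log-concavity of an extended nonnegative function. Values in `ℝ≥0∞` are allowed because
marginals and convolutions are not known to be finite a priori. The endpoint weights are left out:
there the inequality is an equality. -/
def IsELogConcave {E : Type*} [AddCommGroup E] [Module ℝ E] (f : E → ℝ≥0∞) : Prop :=
  ∀ ⦃a b : ℝ⦄, 0 < a → 0 < b → a + b = 1 → ∀ x y, f x ^ a * f y ^ b ≤ f (a • x + b • y)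

section LinearStructure

variable {E F : Type*} [AddCommGroup E] [Module ℝ E] [AddCommGroup F] [Module ℝ F]

lemma isELogConcave_ofReal_exp_neg {φ : E → ℝ} (hφ : ConvexOn ℝ univ φ) :
    IsELogConcave fun x => ENNReal.ofReal (Real.exp (-φ x)) := by
  intro a b ha hb hab x y
  rw [ENNReal.ofReal_rpow_of_pos (Real.exp_pos _), ENNReal.ofReal_rpow_of_pos (Real.exp_pos _),
    ← ENNReal.ofReal_mul (by positivity), ← Real.exp_mul, ← Real.exp_mul, ← Real.exp_add]
  have convex := hφ.2 (mem_univ x) (mem_univ y) ha.le hb.le hab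
  rw [smul_eq_mul, smul_eq_mul] at convex
  refine ENNReal.ofReal_le_ofReal (Real.exp_le_exp.2 ?_)
  linarith

namespace IsELogConcave

variable {f g : E → ℝ≥0∞}

lemma mul (hf : IsELogConcave f) (hg : IsELogConcave g) : IsELogConcave fun x => f x * g x := by
  intro a b ha hb hab x y
  calc (f x * g x) ^ a * (f y * g y) ^ b
      = (f x ^ a * f y ^ b) * (g x ^ a * g y ^ b) := by
        rw [ENNReal.mul_rpow_of_nonneg _ _ ha.le, ENNReal.mul_rpow_of_nonneg _ _ hb.le,
          mul_mul_mul_comm]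
    _ ≤ f (a • x + b • y) * g (a • x + b • y) :=
        mul_le_mul' (hf ha hb hab x y) (hg ha hb hab x y)

lemma comp_linearMap (hf : IsELogConcave f) (L : F →ₗ[ℝ] E) : IsELogConcave fun x => f (L x) := by
  intro a b ha hb hab x y
  simpa only [map_add, map_smul] using hf ha hb hab (L x) (L y)

lemma marginal [MeasurableSpace E] [MeasurableSpace F] {ν : Measure F}
    (hν : SatisfiesPrekopaLeindler ν) {K : E × F → ℝ≥0∞} (hK : IsELogConcave K)
    (hK_meas : Measurable K) : IsELogConcave fun x => ∫⁻ y, K (x, y) ∂ν :=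
  fun _ _ ha hb hab x x' =>
    hν ha hb hab (hK_meas.comp measurable_prodMk_left) (hK_meas.comp measurable_prodMk_left)
      (hK_meas.comp measurable_prodMk_left) fun y y' => hK ha hb hab (x, y) (x', y')

end IsELogConcave

end LinearStructure

lemma IsELogConcave.ne_top {E : Type*} [NormedAddCommGroup E] [NormedSpace ℝ E]
    [FiniteDimensional ℝ E] [MeasurableSpace E] [BorelSpace E] {μ : Measure E}
    [μ.IsAddHaarMeasure] {f : E → ℝ≥0∞} (hf : IsELogConcave f) (hf_zero : ¬ f =ᵐ[μ] 0)
    (hf_top : ∀ᵐ x ∂μ, f x ≠ ⊤) (z : E) : f z ≠ ⊤ := by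
  intro hz
  -- An infinite value at `z` propagates to the midpoints of `z` with the support of `f`.
  have midpoints_subset : AffineMap.homothety z (1 / 2 : ℝ) '' {x | f x ≠ 0} ⊆ {x | f x = ⊤} := by
    rintro _ ⟨x, hx, rfl⟩
    have hx' : f x ^ (1 / 2 : ℝ) ≠ 0 := by simpa using hx
    have midpoint_le := hf one_half_pos one_half_pos (add_halves 1) z x
    rw [hz, ENNReal.top_rpow_of_pos one_half_pos, ENNReal.top_mul hx', top_le_iff] at midpoint_le
    have homothety_eq :
        AffineMap.homothety z (1 / 2 : ℝ) x = (1 / 2 : ℝ) • z + (1 / 2 : ℝ) • x := by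
      rw [AffineMap.homothety_apply, vsub_eq_sub, vadd_eq_add]
      module
    rwa [mem_ofPred_eq, homothety_eq]
  have top_null : μ {x | f x = ⊤} = 0 := by simpa [ae_iff] using hf_top
  have midpoints_null := measure_mono_null midpoints_subset top_null
  rw [Measure.addHaar_image_homothety, mul_eq_zero] at midpoints_null
  exact hf_zero (midpoints_null.resolve_left (by simp))

lemma IsLogConcaveFun.isELogConcave_ofReal {n : ℕ} {g : Euc n → ℝ} (hg : IsLogConcaveFun g) :
    IsELogConcave fun x => ENNReal.ofReal (g x) := by
  intro a b ha hb hab x y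
  rw [ENNReal.ofReal_rpow_of_nonneg (hg.1 x) ha.le, ENNReal.ofReal_rpow_of_nonneg (hg.1 y) hb.le,
    ← ENNReal.ofReal_mul (Real.rpow_nonneg (hg.1 x) a)]
  exact ENNReal.ofReal_le_ofReal (hg.2 x y a b ha.le hb.le hab)

lemma IsELogConcave.isLogConcaveFun_toReal {n : ℕ} {f : Euc n → ℝ≥0∞} (hf : IsELogConcave f)
    (hf_top : ∀ x, f x ≠ ⊤) : IsLogConcaveFun fun x => (f x).toReal := by
  refine ⟨fun x => ENNReal.toReal_nonneg, fun x y a b ha hb hab => ?_⟩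
  rcases ha.eq_or_lt with rfl | ha
  · obtain rfl : b = 1 := by linarith
    simp
  rcases hb.eq_or_lt with rfl | hb
  · obtain rfl : a = 1 := by linarith
    simp
  rw [ENNReal.toReal_rpow, ENNReal.toReal_rpow, ← ENNReal.toReal_mul]
  exact ENNReal.toReal_mono (hf_top _) (hf ha hb hab x y)

/-! ### Gaussian factors -/

/-- The unnormalized Gaussian weight `e^{-u|x|²/2}`, in the extended nonnegative reals. It is the
factor taken out of a density in the definition of uniform log-concavity. -/
noncomputable def gaussWeight {E : Type*} [Norm E] (u : ℝ) (x : E) : ℝ≥0∞ :=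
  ENNReal.ofReal (Real.exp (-u * ‖x‖ ^ 2 / 2))

section GaussWeight

variable {E : Type*} [NormedAddCommGroup E] {u v : ℝ}

lemma gaussWeight_ne_top (u : ℝ) (x : E) : gaussWeight u x ≠ ⊤ :=
  ENNReal.ofReal_ne_top

lemma gaussWeight_ne_zero (u : ℝ) (x : E) : gaussWeight u x ≠ 0 :=
  (ENNReal.ofReal_pos.2 (Real.exp_pos _)).ne'

@[fun_prop]
lemma measurable_gaussWeight [MeasurableSpace E] [OpensMeasurableSpace E] (u : ℝ) :
    Measurable (gaussWeight u : E → ℝ≥0∞) := by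
  unfold gaussWeight
  fun_prop

lemma isELogConcave_gaussWeight [NormedSpace ℝ E] (hu : 0 ≤ u) :
    IsELogConcave (gaussWeight u : E → ℝ≥0∞) := by
  have convex : ConvexOn ℝ univ fun x : E => u / 2 * ‖x‖ ^ 2 :=
    (convexOn_univ_norm.pow (fun x _ => norm_nonneg x) 2).smul (div_nonneg hu zero_le_two)
  convert isELogConcave_ofReal_exp_neg convex using 2 with x
  unfold gaussWeight
  congr 2
  ring

variable [InnerProductSpace ℝ E]

lemma mul_norm_sq_add_mul_norm_sub_sq (huv : u + v ≠ 0) (x z : E) :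
    u * ‖x‖ ^ 2 + v * ‖z - x‖ ^ 2 =
      u * v / (u + v) * ‖z‖ ^ 2 + (u + v) * ‖x - (v / (u + v)) • z‖ ^ 2 := by
  rw [norm_sub_sq_real, norm_sub_sq_real, norm_smul, inner_smul_right, mul_pow,
    real_inner_comm x z, Real.norm_eq_abs, sq_abs]
  field_simp
  ring

lemma gaussWeight_mul_gaussWeight_sub (huv : u + v ≠ 0) (x z : E) :
    gaussWeight u x * gaussWeight v (z - x) =
      gaussWeight (u * v / (u + v)) z * gaussWeight (u + v) (x - (v / (u + v)) • z) := by
  unfold gaussWeight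
  rw [← ENNReal.ofReal_mul (by positivity), ← ENNReal.ofReal_mul (by positivity),
    ← Real.exp_add, ← Real.exp_add]
  congr 2
  linear_combination (-1 / 2) * mul_norm_sq_add_mul_norm_sub_sq huv x z

/-- The function of `(z, x)` whose integral over `x` remains, after the factor
`e^{-(uv/(u+v))|z|²/2}` is taken out, in the convolution at `z` of `e^{-u|x|²/2} g` and
`e^{-v|x|²/2} h`. -/
noncomputable def gaussConvKernel (u v : ℝ) (g h : E → ℝ≥0∞) (p : E × E) : ℝ≥0∞ :=
  g p.2 * h (p.1 - p.2) * gaussWeight (u + v) (p.2 - (v / (u + v)) • p.1)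

variable {g h : E → ℝ≥0∞}

lemma IsELogConcave.gaussConvKernel (hg : IsELogConcave g) (hh : IsELogConcave h)
    (huv : 0 ≤ u + v) : IsELogConcave (gaussConvKernel u v g h) := by
  let fst := LinearMap.fst ℝ E E
  let snd := LinearMap.snd ℝ E E
  exact ((hg.comp_linearMap snd).mul (hh.comp_linearMap (fst - snd))).mul
    ((isELogConcave_gaussWeight huv).comp_linearMap (snd - (v / (u + v)) • fst))

variable [MeasurableSpace E]

lemma measurable_gaussConvKernel [BorelSpace E] [SecondCountableTopology E] (u v : ℝ)
    (hg : Measurable g) (hh : Measurable h) : Measurable (gaussConvKernel u v g h) := by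
  unfold gaussConvKernel
  fun_prop

lemma lconvolution_gaussWeight_mul (huv : u + v ≠ 0) (g h : E → ℝ≥0∞) (μ : Measure E) :
    (fun x => gaussWeight u x * g x) ⋆ₗ[μ] (fun x => gaussWeight v x * h x) =
      fun z => gaussWeight (u * v / (u + v)) z * ∫⁻ x, gaussConvKernel u v g h (z, x) ∂μ := by
  ext z
  rw [lconvolution_def, ← lintegral_const_mul' _ _ (gaussWeight_ne_top _ z)]
  refine lintegral_congr fun x => ?_
  rw [neg_add_eq_sub, mul_mul_mul_comm, gaussWeight_mul_gaussWeight_sub huv, gaussConvKernel]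
  ring

end GaussWeight

/-! ### Uniformly log-concave measures -/

section UniformlyLogConcave

variable {n : ℕ} {u : ℝ} {μ : Measure (Euc n)}

lemma UniformlyLogConcave.exists_isELogConcave (hμ : UniformlyLogConcave u μ) :
    ∃ g : Euc n → ℝ≥0∞, Measurable g ∧ IsELogConcave g ∧
      μ = volume.withDensity fun x => gaussWeight u x * g x := by
  obtain ⟨g, hg_meas, hg, rfl⟩ := hμ
  refine ⟨fun x => ENNReal.ofReal (g x), by fun_prop, hg.isELogConcave_ofReal, ?_⟩
  simp only [ENNReal.ofReal_mul (Real.exp_nonneg _), gaussWeight]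

lemma uniformlyLogConcave_zero (u : ℝ) : UniformlyLogConcave u (0 : Measure (Euc n)) :=
  ⟨fun _ => 0, measurable_const,
    IsELogConcave.isLogConcaveFun_toReal (f := 0) (by intro a b ha; simp [ha]) (by simp), by simp⟩

lemma IsELogConcave.uniformlyLogConcave_withDensity {g : Euc n → ℝ≥0∞} (hg : IsELogConcave g)
    (hg_meas : Measurable g) (hfin : ∫⁻ x, gaussWeight u x * g x ≠ ⊤) :
    UniformlyLogConcave u (volume.withDensity fun x => gaussWeight u x * g x) := by
  by_cases hg_zero : g =ᵐ[volume] 0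
  · have density_zero : (fun x => gaussWeight u x * g x) =ᵐ[volume] 0 := by
      filter_upwards [hg_zero] with x hx
      simp [hx]
    rw [withDensity_congr_ae density_zero, withDensity_zero]
    exact uniformlyLogConcave_zero u
  have hg_ae_top : ∀ᵐ x, g x ≠ ⊤ := by
    filter_upwards [ae_lt_top (by fun_prop) hfin] with x hx hgx
    rw [hgx, ENNReal.mul_top (gaussWeight_ne_zero u x)] at hx
    exact lt_irrefl _ hx
  have hg_top : ∀ x, g x ≠ ⊤ := hg.ne_top hg_zero hg_ae_top
  refine ⟨fun x => (g x).toReal, hg_meas.ennreal_toReal, hg.isLogConcaveFun_toReal hg_top, ?_⟩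
  simp only [ENNReal.ofReal_mul (Real.exp_nonneg _), gaussWeight, ENNReal.ofReal_toReal (hg_top _)]

lemma uniformlyLogConcave_gaussMeasure (n : ℕ) {s : ℝ} (hs : 0 < s) :
    UniformlyLogConcave (1 / s) (gaussMeasure n s) := by
  set c : ℝ := (2 * π * s) ^ (-(n : ℝ) / 2)
  have hc : 0 < c := by positivity
  refine ⟨fun _ => c, measurable_const, ⟨fun _ => hc.le, fun _ _ a b _ _ hab => ?_⟩, ?_⟩
  · rw [← Real.rpow_add hc, hab, Real.rpow_one]
  · unfold gaussMeasure gaussDensity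
    congr! 3 with x
    rw [mul_comm]
    congr 2
    ring

lemma integrable_gaussDensity (n : ℕ) {s : ℝ} (hs : 0 < s) : Integrable (gaussDensity n s) := by
  have hre : 0 < ((1 / (2 * s) : ℝ) : ℂ).re := by rw [Complex.ofReal_re]; positivity
  have exp_integrable :=
    (GaussianFourier.integrable_cexp_neg_mul_sq_norm_add (V := Euc n) hre 0 0).norm
  refine (exp_integrable.const_mul ((2 * π * s) ^ (-(n : ℝ) / 2))).congr (ae_of_all _ fun x => ?_)
  have exponent_re : (-((1 / (2 * s) : ℝ) : ℂ) * ‖x‖ ^ 2 + 0 * (⟪(0 : Euc n), x⟫ : ℝ)).re =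
      -‖x‖ ^ 2 / (2 * s) := by
    rw [zero_mul, add_zero]
    norm_cast
    ring
  simp only [gaussDensity, Complex.norm_exp, exponent_re]

lemma isFiniteMeasure_gaussMeasure (n : ℕ) {s : ℝ} (hs : 0 < s) :
    IsFiniteMeasure (gaussMeasure n s) :=
  isFiniteMeasure_withDensity_ofReal (integrable_gaussDensity n hs).hasFiniteIntegral

end UniformlyLogConcave

theorem conv_uniformly_logConcave_general {n : ℕ} {u v : ℝ} (huv : 0 < u + v)
    {μ ν : Measure (Euc n)} [IsFiniteMeasure μ] [IsFiniteMeasure ν]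
    (hμ : UniformlyLogConcave u μ) (hν : UniformlyLogConcave v ν) :
    UniformlyLogConcave (u * v / (u + v)) (measConv μ ν) := by
  obtain ⟨g, hg_meas, hg, hμ_eq⟩ := hμ.exists_isELogConcave
  obtain ⟨h, hh_meas, hh, hν_eq⟩ := hν.exists_isELogConcave
  have hK_meas : Measurable (gaussConvKernel u v g h) :=
    measurable_gaussConvKernel u v hg_meas hh_meas
  have hK_marginal : IsELogConcave fun z => ∫⁻ x, gaussConvKernel u v g h (z, x) :=
    (hg.gaussConvKernel hh huv.le).marginal satisfiesPrekopaLeindler_volume hK_meas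
  have conv_eq : measConv μ ν = volume.withDensity fun z =>
      gaussWeight (u * v / (u + v)) z * ∫⁻ x, gaussConvKernel u v g h (z, x) := by
    rw [← lconvolution_gaussWeight_mul huv.ne', hμ_eq, hν_eq]
    exact conv_withDensity_eq_lconvolution (by fun_prop) (by fun_prop)
  have hfin : measConv μ ν univ ≠ ⊤ := measure_ne_top (μ ∗ ν) univ
  rw [conv_eq] at hfin ⊢
  rw [withDensity_apply _ .univ, Measure.restrict_univ] at hfin
  exact hK_marginal.uniformlyLogConcave_withDensity hK_meas.lintegral_prod_right' hfin

/-- If `μ` is `(1/t)`-uniformly log-concave, then `μ * γ_s` is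
`(1/(t+s))`-uniformly log-concave. -/
theorem conv_uniformly_logConcave {n : ℕ} (s t : ℝ) (hs : 0 < s) (ht : 0 < t)
    (μ : Measure (Euc n)) [IsProbabilityMeasure μ] (hac : μ ≪ volume)
    (h : UniformlyLogConcave (1 / t) μ) :
    UniformlyLogConcave (1 / (t + s)) (measConv μ (gaussMeasure n s)) := by
  have := isFiniteMeasure_gaussMeasure n hs
  have harmonic : 1 / (t + s) = 1 / t * (1 / s) / (1 / t + 1 / s) := by field_simp; ring
  exact harmonic ▸ conv_uniformly_logConcave_general (by positivity) h
    (uniformlyLogConcave_gaussMeasure n hs)
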